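/- Let T > 0 and k ≥ 0. Let y_u, y_v ∈ [0, T] and z_u, z_v ∈ ℝ^k with ‖z_u‖₂ ≤ T and ‖z_v‖₂ ≤ T. Let g be a random vector in ℝ^k whose coordinates are independent standard Gaussians, and define f_g(w) = y_w + (1/6)·⟨z_w, g⟩ for w ∈ {u,v}. Then the probability over g that all three of the following events hold simultaneously is at least 1/20: (A₁) f_g(v) ∈ [−T/3, 4T/3]; (A₂) f_g(u) ∈ [−T/3, 4T/3]; (A₃) |f_g(u) − f_g(v)| ≥ (1/6)·√((y_u − y_v)² + ‖z_u − z_v‖₂²). -/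

import Mathlib

open MeasureTheory ProbabilityTheory

/-- The alternating Taylor bounds of `exp (-u)` for `0 ≤ u`. -/
lemma exp_neg_sub_taylor_nonneg (n : ℕ) {u : ℝ} (hu : 0 ≤ u) :
    0 ≤ (-1) ^ n * (Real.exp (-u) - ∑ i ∈ Finset.range n, (-u) ^ i / (i.factorial : ℝ)) := by
  induction n generalizing u with
  | zero => simp [Real.exp_nonneg]
  | succ n ih =>
    set D : ℝ → ℝ := fun x ↦ (-1) ^ (n + 1) *
      (Real.exp (-x) - ∑ i ∈ Finset.range (n + 1), (-x) ^ i / (i.factorial : ℝ)) with hD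
    have hderiv (x : ℝ) : HasDerivAt D ((-1) ^ n *
        (Real.exp (-x) - ∑ i ∈ Finset.range n, (-x) ^ i / (i.factorial : ℝ))) x := by
      have hexp : HasDerivAt (fun x : ℝ ↦ Real.exp (-x)) (Real.exp (-x) * (-1)) x :=
        (hasDerivAt_neg x).exp
      have hsum : HasDerivAt
          (fun x : ℝ ↦ ∑ i ∈ Finset.range (n + 1), (-x) ^ i / (i.factorial : ℝ))
          (∑ i ∈ Finset.range (n + 1), (i * (-x) ^ (i - 1) * (-1)) / (i.factorial : ℝ)) x :=
        HasDerivAt.fun_sum fun i _ ↦ ((hasDerivAt_neg x).pow i).div_const _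
      refine ((hexp.sub hsum).const_mul ((-1) ^ (n + 1))).congr_deriv ?_
      rw [Finset.sum_range_succ', pow_succ]
      have hterm : ∀ i ∈ Finset.range n,
          (((i + 1 : ℕ) : ℝ) * (-x) ^ (i + 1 - 1) * (-1)) / ((i + 1).factorial : ℝ)
            = -((-x) ^ i / (i.factorial : ℝ)) := by
        intro i _
        rw [Nat.factorial_succ, Nat.add_sub_cancel]
        push_cast
        have : (i.factorial : ℝ) ≠ 0 := by positivity
        field_simp
      rw [Finset.sum_congr rfl hterm, Finset.sum_neg_distrib]
      simp
      ring
    have hmono : MonotoneOn D (Set.Ici 0) := by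
      refine monotoneOn_of_hasDerivWithinAt_nonneg (convex_Ici 0)
        (fun x _ ↦ (hderiv x).continuousAt.continuousWithinAt)
        (fun x _ ↦ (hderiv x).hasDerivWithinAt) fun x hx ↦ ih ?_
      exact interior_subset hx
    have h0 : D 0 = 0 := by
      simp [hD, Finset.sum_range_succ']
    exact h0 ▸ hmono Set.self_mem_Ici hu hu

lemma integral_exp_neg_sq_div_two_le :
    ∫ x in (-1 : ℝ)..1, Real.exp (-(x ^ 2 / 2)) ≤ 103 / 60 := by
  calc ∫ x in (-1 : ℝ)..1, Real.exp (-(x ^ 2 / 2))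
      ≤ ∫ x in (-1 : ℝ)..1, (1 - x ^ 2 / 2 + x ^ 4 / 8) := by
        refine intervalIntegral.integral_mono_on (by norm_num)
          (Continuous.intervalIntegrable (by fun_prop) _ _)
          (Continuous.intervalIntegrable (by fun_prop) _ _) fun x _ ↦ ?_
        have := exp_neg_sub_taylor_nonneg 3 (u := x ^ 2 / 2) (by positivity)
        simp [Finset.sum_range_succ, Nat.factorial] at this
        linarith
    _ = 103 / 60 := by
        rw [intervalIntegral.integral_add, intervalIntegral.integral_sub] <;>
        first
        | exact Continuous.intervalIntegrable (by fun_prop) _ _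
        | (simp only [intervalIntegral.integral_div, integral_pow,
            intervalIntegral.integral_const]
           norm_num)

lemma le_integral_exp_neg_sq_div_two :
    2387 / 1000 ≤ ∫ x in (-2 : ℝ)..2, Real.exp (-(x ^ 2 / 2)) := by
  calc (2387 / 1000 : ℝ)
      ≤ ∫ x in (-2 : ℝ)..2, ∑ i ∈ Finset.range 8,
          x ^ (2 * i) * ((-1 / 2) ^ i / (i.factorial : ℝ)) := by
        rw [intervalIntegral.integral_finsetSum
          fun i _ ↦ Continuous.intervalIntegrable (by fun_prop) _ _]
        simp only [intervalIntegral.integral_mul_const, integral_pow]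
        norm_num [Finset.sum_range_succ, Nat.factorial]
    _ ≤ ∫ x in (-2 : ℝ)..2, Real.exp (-(x ^ 2 / 2)) := by
        refine intervalIntegral.integral_mono_on (by norm_num)
          (Continuous.intervalIntegrable (by fun_prop) _ _)
          (Continuous.intervalIntegrable (by fun_prop) _ _) fun x _ ↦ ?_
        have := exp_neg_sub_taylor_nonneg 8 (u := x ^ 2 / 2) (by positivity)
        rw [Even.neg_one_pow (by decide), one_mul, sub_nonneg] at this
        refine le_trans (le_of_eq (Finset.sum_congr rfl fun i _ ↦ ?_)) this
        rw [pow_mul, show -(x ^ 2 / 2) = x ^ 2 * (-1 / 2) by ring, mul_pow]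
        ring

lemma gaussianReal_real_Ioc {a b : ℝ} (hab : a ≤ b) :
    (gaussianReal 0 1).real (Set.Ioc a b)
      = (√(2 * Real.pi))⁻¹ * ∫ x in a..b, Real.exp (-(x ^ 2 / 2)) := by
  rw [measureReal_def, gaussianReal_apply_eq_integral 0 one_ne_zero,
    ENNReal.toReal_ofReal (integral_nonneg fun x ↦ gaussianPDFReal_nonneg 0 1 x),
    intervalIntegral.integral_of_le hab, ← integral_const_mul]
  simp [gaussianPDFReal, neg_div]

lemma gaussianReal_real_Ici_one :
    (gaussianReal 0 1).real (Set.Ici 1)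
      = (1 - (gaussianReal 0 1).real (Set.Ioc (-1) 1)) / 2 := by
  have hna : NullSingletonClass (gaussianReal 0 1) := nullSingletonClass_gaussianReal one_ne_zero
  have hsymm : (gaussianReal 0 1).real (Set.Iic (-1)) = (gaussianReal 0 1).real (Set.Ici 1) := by
    have h := gaussianReal_map_neg (μ := 0) (v := 1)
    rw [neg_zero] at h
    conv_lhs => rw [← h]
    rw [map_measureReal_apply measurable_neg measurableSet_Iic]
    simp
  have hIci : (gaussianReal 0 1).real (Set.Ici 1) = (gaussianReal 0 1).real (Set.Ioi 1) :=
    measureReal_congr Ioi_ae_eq_Ici.symm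
  have hcompl := probReal_add_probReal_compl (μ := gaussianReal 0 1) (s := Set.Iic 1)
    measurableSet_Iic
  rw [Set.compl_Iic, ← Set.Iic_union_Ioc_eq_Iic (show (-1 : ℝ) ≤ 1 by norm_num),
    measureReal_union (Set.Iic_disjoint_Ioc le_rfl) measurableSet_Ioc] at hcompl
  linarith

lemma one_div_twenty_le_gaussianReal :
    1 / 20 ≤ (gaussianReal 0 1).real (Set.Ici 1)
      - 2 * (1 - (gaussianReal 0 1).real (Set.Icc (-2) 2)) := by
  have hIcc : (gaussianReal 0 1).real (Set.Ioc (-2) 2)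
      ≤ (gaussianReal 0 1).real (Set.Icc (-2) 2) := measureReal_mono Set.Ioc_subset_Icc_self
  rw [gaussianReal_real_Ioc (by norm_num)] at hIcc
  rw [gaussianReal_real_Ici_one, gaussianReal_real_Ioc (by norm_num)]
  have hc : 0.396 ≤ (√(2 * Real.pi))⁻¹ := by
    rw [le_inv_comm₀ (by norm_num) (by positivity), Real.sqrt_le_left (by norm_num)]
    have := Real.pi_lt_d2
    norm_num
    linarith
  nlinarith [mul_le_mul_of_nonneg_left integral_exp_neg_sq_div_two_le
      (show 0 ≤ (√(2 * Real.pi))⁻¹ by positivity),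
    mul_le_mul_of_nonneg_left le_integral_exp_neg_sq_div_two
      (show 0 ≤ (√(2 * Real.pi))⁻¹ by positivity)]

/-- A linear functional of a standard Gaussian vector is distributed as its Euclidean norm times
a standard Gaussian variable. -/
lemma map_sum_mul_pi_gaussianReal {ι : Type*} [Fintype ι] (z : ι → ℝ) :
    (Measure.pi fun _ : ι => gaussianReal 0 1).map (fun g ↦ ∑ i, z i * g i)
      = (gaussianReal 0 1).map (√(∑ i, z i ^ 2) * ·) := by
  have hindep : iIndepFun (fun (i : ι) (g : ι → ℝ) ↦ z i * g i)
      (Measure.pi fun _ : ι => gaussianReal 0 1) :=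
    iIndepFun_pi (X := fun i x ↦ z i * x) fun i ↦ by fun_prop
  refine Measure.ext_of_charFun ?_
  rw [hindep.charFun_map_fun_sum_eq_prod
    fun i ↦ (by fun_prop : Measurable fun g : ι → ℝ ↦ z i * g i).aemeasurable]
  ext t
  have hmap (i : ι) : (Measure.pi fun _ : ι => gaussianReal 0 1).map (fun g ↦ z i * g i)
      = (gaussianReal 0 1).map (z i * ·) := by
    conv_rhs => rw [← (measurePreserving_eval (fun _ : ι => gaussianReal 0 1) i).map_eq]
    exact (Measure.map_map (by fun_prop) (by fun_prop)).symm
  simp only [Finset.prod_apply, hmap, gaussianReal_map_const_mul, charFun_gaussianReal]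
  rw [← Complex.exp_sum]
  congr 1
  have hs : ((√(∑ i, z i ^ 2) : ℝ) : ℂ) ^ 2 = ∑ i, (z i : ℂ) ^ 2 := by
    rw [← Complex.ofReal_pow, Real.sq_sqrt (by positivity)]
    push_cast
    rfl
  simp [hs, Finset.sum_mul, Finset.sum_div]

lemma gaussianReal_real_Ici_one_le_pi {ι : Type*} [Fintype ι] (z : ι → ℝ) :
    (gaussianReal 0 1).real (Set.Ici 1) ≤
      (Measure.pi fun _ : ι => gaussianReal 0 1).real
        {g | √(∑ i, z i ^ 2) ≤ ∑ i, z i * g i} := by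
  have h := map_measureReal_apply (μ := Measure.pi fun _ : ι => gaussianReal 0 1)
    (f := fun g ↦ ∑ i, z i * g i) (by fun_prop) (measurableSet_Ici (a := √(∑ i, z i ^ 2)))
  rw [map_sum_mul_pi_gaussianReal,
    map_measureReal_apply (by fun_prop) measurableSet_Ici] at h
  refine le_trans (measureReal_mono fun x hx ↦ ?_) h.le
  exact le_mul_of_one_le_right (Real.sqrt_nonneg _) hx

lemma gaussianReal_real_Icc_two_le_pi {ι : Type*} [Fintype ι] (z : ι → ℝ) {T : ℝ}
    (hz : √(∑ i, z i ^ 2) ≤ T) :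
    (gaussianReal 0 1).real (Set.Icc (-2) 2) ≤
      (Measure.pi fun _ : ι => gaussianReal 0 1).real
        {g | ∑ i, z i * g i ∈ Set.Icc (-(2 * T)) (2 * T)} := by
  have h := map_measureReal_apply (μ := Measure.pi fun _ : ι => gaussianReal 0 1)
    (f := fun g ↦ ∑ i, z i * g i) (by fun_prop)
    (measurableSet_Icc (a := -(2 * T)) (b := 2 * T))
  rw [map_sum_mul_pi_gaussianReal,
    map_measureReal_apply (by fun_prop) measurableSet_Icc] at h
  refine le_trans (measureReal_mono fun x hx ↦ ?_) h.le
  have h0 : 0 ≤ √(∑ i, z i ^ 2) := Real.sqrt_nonneg _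
  obtain ⟨h1, h2⟩ := hx
  constructor <;> nlinarith

lemma one_div_twenty_le_pi_gaussianReal_of_le {ι : Type*} [Fintype ι] {T yu yv : ℝ}
    (hyu : yu ∈ Set.Icc 0 T) (hyv : yv ∈ Set.Icc 0 T) (hle : yv ≤ yu) (zu zv : ι → ℝ)
    (hzu : √(∑ i, zu i ^ 2) ≤ T) (hzv : √(∑ i, zv i ^ 2) ≤ T) :
    (1 / 20 : ENNReal) ≤
      (Measure.pi fun _ : ι => gaussianReal 0 1)
        {g : ι → ℝ |
          (yv + (1 / 6) * ∑ i, zv i * g i) ∈ Set.Icc (-(T / 3)) (4 * T / 3) ∧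
          (yu + (1 / 6) * ∑ i, zu i * g i) ∈ Set.Icc (-(T / 3)) (4 * T / 3) ∧
          (1 / 6) * √((yu - yv) ^ 2 + ∑ i, (zu i - zv i) ^ 2) ≤
            |(yu + (1 / 6) * ∑ i, zu i * g i) - (yv + (1 / 6) * ∑ i, zv i * g i)|} := by
  set P := Measure.pi fun _ : ι => gaussianReal 0 1
  set B : Set (ι → ℝ) := {g | √(∑ i, (zu i - zv i) ^ 2) ≤ ∑ i, (zu i - zv i) * g i}
  set Cu : Set (ι → ℝ) := {g | ∑ i, zu i * g i ∈ Set.Icc (-(2 * T)) (2 * T)}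
  set Cv : Set (ι → ℝ) := {g | ∑ i, zv i * g i ∈ Set.Icc (-(2 * T)) (2 * T)}
  have hB : (gaussianReal 0 1).real (Set.Ici 1) ≤ P.real B :=
    gaussianReal_real_Ici_one_le_pi fun i ↦ zu i - zv i
  have hCu : (gaussianReal 0 1).real (Set.Icc (-2) 2) ≤ P.real Cu :=
    gaussianReal_real_Icc_two_le_pi zu hzu
  have hCv : (gaussianReal 0 1).real (Set.Icc (-2) 2) ≤ P.real Cv :=
    gaussianReal_real_Icc_two_le_pi zv hzv
  have hCu_compl := probReal_add_probReal_compl (μ := P) (s := Cu)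
    (measurableSet_Icc.preimage (by fun_prop))
  have hCv_compl := probReal_add_probReal_compl (μ := P) (s := Cv)
    (measurableSet_Icc.preimage (by fun_prop))
  have hcover : P.real B ≤ P.real (B ∩ Cu ∩ Cv) + P.real Cuᶜ + P.real Cvᶜ :=
    (measureReal_mono (s₂ := B ∩ Cu ∩ Cv ∪ Cuᶜ ∪ Cvᶜ) fun g hg ↦ by
      by_cases hu : g ∈ Cu <;> by_cases hv : g ∈ Cv <;> simp [hg, hu, hv]).trans
      ((measureReal_union_le _ _).trans (by gcongr; exact measureReal_union_le _ _))
  have hreal : 1 / 20 ≤ P.real (B ∩ Cu ∩ Cv) := by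
    linarith [one_div_twenty_le_gaussianReal]
  calc (1 / 20 : ENNReal) = ENNReal.ofReal (1 / 20) := by
        rw [ENNReal.ofReal_div_of_pos (by norm_num)]
        simp
    _ ≤ P (B ∩ Cu ∩ Cv) := ENNReal.ofReal_le_of_le_toReal hreal
    _ ≤ _ := measure_mono ?_
  rintro g ⟨⟨hBg, hu1, hu2⟩, hv1, hv2⟩
  obtain ⟨hyu0, hyuT⟩ := hyu
  obtain ⟨hyv0, hyvT⟩ := hyv
  refine ⟨⟨by linarith, by linarith⟩, ⟨by linarith, by linarith⟩, le_trans ?_ (le_abs_self _)⟩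
  have hsum : ∑ i, (zu i - zv i) * g i = ∑ i, zu i * g i - ∑ i, zv i * g i := by
    rw [← Finset.sum_sub_distrib]
    simp only [sub_mul]
  have hsqrt : √((yu - yv) ^ 2 + ∑ i, (zu i - zv i) ^ 2)
      ≤ (yu - yv) + √(∑ i, (zu i - zv i) ^ 2) := by
    have hnonneg : 0 ≤ ∑ i, (zu i - zv i) ^ 2 := by positivity
    rw [Real.sqrt_le_left (add_nonneg (sub_nonneg.2 hle) (Real.sqrt_nonneg _))]
    nlinarith [Real.sq_sqrt hnonneg, mul_nonneg (sub_nonneg.2 hle)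
      (Real.sqrt_nonneg (∑ i, (zu i - zv i) ^ 2))]
  have hBg' : √(∑ i, (zu i - zv i) ^ 2) ≤ ∑ i, (zu i - zv i) * g i := hBg
  linarith

/-- Claim 4.9 (`clipping_claim_lower`): with `y_u, y_v ∈ [0,T]`,
`‖z_u‖₂, ‖z_v‖₂ ≤ T`, and a standard Gaussian vector `g ∈ ℝ^k`, the three
events `A₁ : f_g(v) ∈ [−T/3, 4T/3]`, `A₂ : f_g(u) ∈ [−T/3, 4T/3]`, and
`A₃ : |f_g(u) − f_g(v)| ≥ (1/6)·‖x_u − x_v‖₂` hold simultaneously with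
probability at least `1/20`, where `f_g(w) = y_w + (1/6)·⟨z_w, g⟩`. -/
theorem stmt14 (T : ℝ) (hT : 0 < T) (k : ℕ)
    (yu yv : ℝ) (hyu : yu ∈ Set.Icc 0 T) (hyv : yv ∈ Set.Icc 0 T)
    (zu zv : Fin k → ℝ)
    (hzu : Real.sqrt (∑ i, zu i ^ 2) ≤ T)
    (hzv : Real.sqrt (∑ i, zv i ^ 2) ≤ T) :
    (1 / 20 : ENNReal) ≤
      (Measure.pi fun _ : Fin k => gaussianReal 0 1)
        {g : Fin k → ℝ |
          (yv + (1 / 6) * ∑ i, zv i * g i) ∈ Set.Icc (-(T / 3)) (4 * T / 3) ∧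
          (yu + (1 / 6) * ∑ i, zu i * g i) ∈ Set.Icc (-(T / 3)) (4 * T / 3) ∧
          (1 / 6) * Real.sqrt ((yu - yv) ^ 2 + ∑ i, (zu i - zv i) ^ 2) ≤
            |(yu + (1 / 6) * ∑ i, zu i * g i) -
              (yv + (1 / 6) * ∑ i, zv i * g i)|} := by
  rcases le_total yv yu with hle | hle
  · exact one_div_twenty_le_pi_gaussianReal_of_le hyu hyv hle zu zv hzu hzv
  · refine (one_div_twenty_le_pi_gaussianReal_of_le hyv hyu hle zv zu hzv hzu).trans
      (measure_mono ?_)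
    rintro g ⟨hu, hv, hdist⟩
    refine ⟨hv, hu, ?_⟩
    rw [abs_sub_comm, sub_sq_comm yu yv]
    simpa only [sub_sq_comm (zu _) (zv _)] using hdist
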